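/- Let (M,d) be a metric space, let D ⊆ M be finite, let w, R : D → ℝ be nonnegative, let p ≥ 1 be a real number, let f : D → D satisfy d(v, f(v)) ≤ 2^{1+1/p}·R(v) for every v ∈ D, and let C ⊆ M be finite and nonempty. Then ∑_{v∈D} w(v)·d(v,C)^p ≤ 4^p·∑_{v∈D} w(v)·R(v)^p + 2^{p-1}·∑_{v∈D} w(v)·d(f(v), C)^p, where d(v,C) := min_{c∈C} d(v,c). -/

import Mathlib

open Metric

/-!
A nonnegative `1`-Lipschitz cost `g`, such as the distance to a set of centers, satisfies
`g x ≤ dist x y + g y`, and convexity of `t ↦ t ^ p` turns this into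
`g x ^ p ≤ 2 ^ (p - 1) * (dist x y ^ p + g y ^ p)`. Moving a point by at most
`2 ^ (1 + 1 / p) * r` therefore costs at most `2 ^ (p - 1) * 2 ^ (p + 1) * r ^ p = 4 ^ p * r ^ p`.
-/

lemma rpow_add_le_two_rpow_mul {p a b : ℝ} (hp : 1 ≤ p) (ha : 0 ≤ a) (hb : 0 ≤ b) :
    (a + b) ^ p ≤ 2 ^ (p - 1) * (a ^ p + b ^ p) := by
  lift a to NNReal using ha
  lift b to NNReal using hb
  exact_mod_cast NNReal.rpow_add_le_mul_rpow_add_rpow a b hp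

lemma two_rpow_sub_one_mul_rpow_one_add_one_div {p : ℝ} (hp : p ≠ 0) :
    (2 : ℝ) ^ (p - 1) * (2 ^ (1 + 1 / p)) ^ p = 4 ^ p := by
  have exponents_add : p - 1 + (1 + 1 / p) * p = 2 * p := by
    field_simp
    ring
  rw [← Real.rpow_mul zero_le_two, ← Real.rpow_add zero_lt_two, exponents_add,
    Real.rpow_mul zero_le_two]
  norm_num

lemma two_rpow_sub_one_mul_rpow_le {p a r : ℝ} (hp : 0 < p) (ha : 0 ≤ a)
    (har : a ≤ 2 ^ (1 + 1 / p) * r) : 2 ^ (p - 1) * a ^ p ≤ 4 ^ p * r ^ p := by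
  have hr : 0 ≤ r := nonneg_of_mul_nonneg_right (ha.trans har) (by positivity)
  calc
    2 ^ (p - 1) * a ^ p ≤ 2 ^ (p - 1) * (2 ^ (1 + 1 / p) * r) ^ p := by gcongr
    _ = 4 ^ p * r ^ p := by
      rw [Real.mul_rpow (by positivity) hr, ← mul_assoc,
        two_rpow_sub_one_mul_rpow_one_add_one_div hp.ne']

section Lipschitz

variable {M : Type*} [PseudoMetricSpace M] {p : ℝ} {g : M → ℝ}

lemma rpow_le_of_lipschitzWith_one (hp : 1 ≤ p) (hg : LipschitzWith 1 g) (hg₀ : ∀ x, 0 ≤ g x)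
    (x y : M) : g x ^ p ≤ 2 ^ (p - 1) * (dist x y ^ p + g y ^ p) := by
  have triangle : g x ≤ dist x y + g y := by
    simpa [add_comm] using hg.le_add_mul x y
  calc
    g x ^ p ≤ (dist x y + g y) ^ p := by
      have := hg₀ x
      gcongr
    _ ≤ 2 ^ (p - 1) * (dist x y ^ p + g y ^ p) :=
      rpow_add_le_two_rpow_mul hp dist_nonneg (hg₀ y)

theorem stmt13_general {ι : Type*} (hp : 1 ≤ p) (hg : LipschitzWith 1 g) (hg₀ : ∀ x, 0 ≤ g x)
    {s : Finset ι} {w R : ι → ℝ} {x y : ι → M} (hw : ∀ i ∈ s, 0 ≤ w i)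
    (hxy : ∀ i ∈ s, dist (x i) (y i) ≤ 2 ^ (1 + 1 / p) * R i) :
    ∑ i ∈ s, w i * g (x i) ^ p ≤
      4 ^ p * ∑ i ∈ s, w i * R i ^ p + 2 ^ (p - 1) * ∑ i ∈ s, w i * g (y i) ^ p := by
  have pointwise : ∀ i ∈ s, g (x i) ^ p ≤ 4 ^ p * R i ^ p + 2 ^ (p - 1) * g (y i) ^ p := by
    intro i hi
    calc
      g (x i) ^ p ≤ 2 ^ (p - 1) * (dist (x i) (y i) ^ p + g (y i) ^ p) :=
        rpow_le_of_lipschitzWith_one hp hg hg₀ (x i) (y i)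
      _ = 2 ^ (p - 1) * dist (x i) (y i) ^ p + 2 ^ (p - 1) * g (y i) ^ p := mul_add ..
      _ ≤ 4 ^ p * R i ^ p + 2 ^ (p - 1) * g (y i) ^ p := by
        gcongr ?_ + _
        exact two_rpow_sub_one_mul_rpow_le (one_pos.trans_le hp) dist_nonneg (hxy i hi)
  calc
    ∑ i ∈ s, w i * g (x i) ^ p
        ≤ ∑ i ∈ s, w i * (4 ^ p * R i ^ p + 2 ^ (p - 1) * g (y i) ^ p) :=
      Finset.sum_le_sum fun i hi ↦ mul_le_mul_of_nonneg_left (pointwise i hi) (hw i hi)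
    _ = 4 ^ p * ∑ i ∈ s, w i * R i ^ p + 2 ^ (p - 1) * ∑ i ∈ s, w i * g (y i) ^ p := by
      simp only [mul_add, Finset.sum_add_distrib, Finset.mul_sum, mul_left_comm]

end Lipschitz

theorem stmt13 {M : Type*} [MetricSpace M] (p : ℝ) (hp : 1 ≤ p)
    (D : Finset M) (w R : M → ℝ) (hw : ∀ v ∈ D, 0 ≤ w v) (hR : ∀ v ∈ D, 0 ≤ R v)
    (f : M → M) (hfD : ∀ v ∈ D, f v ∈ D)
    (hf : ∀ v ∈ D, dist v (f v) ≤ 2 ^ (1 + 1 / p) * R v)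
    (C : Finset M) (hC : C.Nonempty) :
    ∑ v ∈ D, w v * infDist v (C : Set M) ^ p ≤
      4 ^ p * ∑ v ∈ D, w v * R v ^ p +
        2 ^ (p - 1) * ∑ v ∈ D, w v * infDist (f v) (C : Set M) ^ p :=
  stmt13_general hp (lipschitz_infDist_pt (C : Set M)) (fun _ ↦ infDist_nonneg) hw hf
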